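/- Let X be a geodesic metric space with basepoint o and let G be a countable group acting on X by isometries such that G contains two independent contracting isometries. Let μ be a non-elementary probability measure on G with L(μ) < ∞, and let (μ_i)_{i>0} be probability measures on G that converge simply to μ (i.e. μ_i(g) → μ(g) for every g ∈ G) and satisfy L(μ_i) → L(μ) (in particular L(μ_i) < ∞ for all large i). Then the escape rates converge: l(μ_i) → l(μ). -/

import Mathlib

open Filter Topology Pointwise

/-- `f` parametrizes a geodesic from `x` to `y` by arclength on `[0, dist x y]`. -/
def IsGeodesicSegment {X : Type*} [MetricSpace X] (f : ℝ → X) (x y : X) : Prop :=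
  f 0 = x ∧ f (dist x y) = y ∧
    ∀ s ∈ Set.Icc (0 : ℝ) (dist x y), ∀ t ∈ Set.Icc (0 : ℝ) (dist x y),
      dist (f s) (f t) = |s - t|

/-- `X` is a geodesic metric space: any two points are joined by a geodesic. -/
def IsGeodesicSpace (X : Type*) [MetricSpace X] : Prop :=
  ∀ x y : X, ∃ f : ℝ → X, IsGeodesicSegment f x y

/-- Nearest-point projection of `x` to the set `A`. -/
def projSet {X : Type*} [MetricSpace X] (A : Set X) (x : X) : Set X :=
  {a ∈ A | dist x a = Metric.infDist x A}

/-- Nearest-point projection of the set `B` to the set `A`. -/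
def projSetOf {X : Type*} [MetricSpace X] (A B : Set X) : Set X :=
  ⋃ x ∈ B, projSet A x

/-- A `K`-quasigeodesic indexed by `ℤ`. -/
def IsQuasigeodesicZ {X : Type*} [MetricSpace X] (K : ℝ) (γ : ℤ → X) : Prop :=
  ∀ s t : ℤ, |(s : ℝ) - (t : ℝ)| / K - K ≤ dist (γ s) (γ t) ∧
    dist (γ s) (γ t) ≤ K * |(s : ℝ) - (t : ℝ)| + K

/-- A `K`-contracting axis indexed by `ℤ`: a `K`-quasigeodesic such that every geodesic
staying `K`-far from it has nearest-point projection of diameter `< K`. -/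
def IsContractingAxisZ {X : Type*} [MetricSpace X] (K : ℝ) (γ : ℤ → X) : Prop :=
  IsQuasigeodesicZ K γ ∧
    ∀ (f : ℝ → X) (x y : X), IsGeodesicSegment f x y →
      (∀ t ∈ Set.Icc (0 : ℝ) (dist x y), K ≤ Metric.infDist (f t) (Set.range γ)) →
      EMetric.diam (projSetOf (Set.range γ) (f '' Set.Icc (0 : ℝ) (dist x y)))
        < ENNReal.ofReal K

/-- The `ℤ`-orbit of the basepoint `o` under powers of `g`. -/
def zorbit {G X : Type*} [Group G] [MetricSpace X] [MulAction G X] (o : X) (g : G) : Set X :=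
  Set.range fun i : ℤ => g ^ i • o

/-- `g` is a contracting isometry: its orbit map `i ↦ g^i • o` is a `K`-contracting axis
for some `K > 1`. -/
def IsContractingIsom {G X : Type*} [Group G] [MetricSpace X] [MulAction G X]
    (o : X) (g : G) : Prop :=
  ∃ K : ℝ, 1 < K ∧ IsContractingAxisZ K fun i : ℤ => g ^ i • o

/-- `g` and `h` are independent contracting isometries: both are contracting, and the
nearest-point projections of each orbit to the other are bounded. -/
def IndependentPair {G X : Type*} [Group G] [MetricSpace X] [MulAction G X]
    (o : X) (g h : G) : Prop :=
  IsContractingIsom o g ∧ IsContractingIsom o h ∧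
    Bornology.IsBounded (projSetOf (zorbit o g) (zorbit o h)) ∧
    Bornology.IsBounded (projSetOf (zorbit o h) (zorbit o g))

/-- `G` contains two independent contracting isometries of `X`. -/
def HasIndepContracting (G : Type*) {X : Type*} [Group G] [MetricSpace X] [MulAction G X]
    (o : X) : Prop :=
  ∃ g h : G, IndependentPair o g h

/-- `μ` is a probability measure on the countable group `G`. -/
def IsProbMeasure {G : Type*} (μ : G → ℝ) : Prop :=
  (∀ g, 0 ≤ μ g) ∧ Summable μ ∧ ∑' g, μ g = 1

/-- Convolution of two (signed) measures on `G`. -/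
noncomputable def conv {G : Type*} [Group G] (μ ν : G → ℝ) : G → ℝ :=
  fun g => ∑' h : G, μ h * ν (h⁻¹ * g)

/-- `n`-fold convolution power of `μ`, with `convPow μ 0` the point mass at the identity. -/
noncomputable def convPow {G : Type*} [Group G] (μ : G → ℝ) : ℕ → G → ℝ
  | 0 => ({1} : Set G).indicator fun _ => (1 : ℝ)
  | n + 1 => conv μ (convPow μ n)

/-- First moment `L(μ) = ∑_g μ(g) d(o, g o)`. -/
noncomputable def firstMoment {G X : Type*} [Group G] [MetricSpace X] [MulAction G X]
    (o : X) (μ : G → ℝ) : ℝ :=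
  ∑' g : G, μ g * dist o (g • o)

/-- `μ` has finite first moment. -/
def HasFiniteFirstMoment {G X : Type*} [Group G] [MetricSpace X] [MulAction G X]
    (o : X) (μ : G → ℝ) : Prop :=
  Summable fun g : G => μ g * dist o (g • o)

/-- The escape rate `l(μ) = lim_n L(μ^{*n})/n`; by subadditivity of `n ↦ L(μ^{*n})`
(Fekete), the limit equals the infimum. -/
noncomputable def escapeRate {G X : Type*} [Group G] [MetricSpace X] [MulAction G X]
    (o : X) (μ : G → ℝ) : ℝ :=
  ⨅ n : ℕ, firstMoment o (convPow μ (n + 1)) / (n + 1 : ℝ)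

/-- `μ` is non-elementary: the sub-semigroup generated by its support contains
two independent contracting isometries. -/
def NonElementary {G X : Type*} [Group G] [MetricSpace X] [MulAction G X]
    (o : X) (μ : G → ℝ) : Prop :=
  ∃ g h : G, g ∈ Subsemigroup.closure {x : G | 0 < μ x} ∧
    h ∈ Subsemigroup.closure {x : G | 0 < μ x} ∧ IndependentPair o g h

/-!
The function `L(μ^{*n})` of `μ` is continuous for the norm of `ℓ¹(G)` weighted by
`g ↦ 1 + d(o, g o)`, and by Scheffé's lemma simple convergence together with convergence of first
moments is convergence in that norm. So `l`, an infimum of continuous functions, is upper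
semicontinuous, and the content is lower semicontinuity.

To bound `l` from below, let `D_n(x)` be the expectation of `d(x, g o) - d(x, o)` for
`g ∼ μ^{*n}`. The worst case `inf_x D_n(x)` is superadditive in `n`, so
`inf_x D_n(x) / n ≤ l(μ)`, and each `D_n(x)` depends continuously on `μ`, uniformly in `x`.
It remains to see that `inf_x D_n(x) / n` comes arbitrarily close to `l(μ)`. Two independent
contracting isometries produce, for every `δ > 0`, a finite family of elements `w_i` such that, for
any points `x` and `z`, all but a proportion `δ` of the paths `x → w_i o → w_i z` are aligned: their
lengths add up to `d(x, w_i z)` up to a constant. Averaging over `z = g o`, from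
every `x` some `w_i` leads to a gain of `(1 - 2δ) L(μ^{*n}) - O(1)`. Since the `w_i` all have
positive mass for the same `μ^{*N}`, inserting a block of `N` steps in front of the `n` others
replaces a bounded deficit of `inf_x D_n(x)` with respect to `(1 - 2δ) l(μ) n` by one that is not
larger, and an induction on blocks concludes.
-/

section Geodesics

variable {X : Type*} [MetricSpace X]

namespace IsGeodesicSegment

variable {f : ℝ → X} {x y : X} {t : ℝ}

lemma dist_left (hf : IsGeodesicSegment f x y) (ht : t ∈ Set.Icc 0 (dist x y)) :
    dist x (f t) = t := by
  obtain ⟨rfl, -, hdist⟩ := hf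
  rw [hdist 0 ⟨le_rfl, dist_nonneg⟩ t ht, zero_sub, abs_neg, abs_of_nonneg ht.1]

lemma dist_right (hf : IsGeodesicSegment f x y) (ht : t ∈ Set.Icc 0 (dist x y)) :
    dist (f t) y = dist x y - t := by
  have h := hf.2.2 t ht (dist x y) ⟨dist_nonneg, le_rfl⟩
  rw [hf.2.1, abs_sub_comm, abs_of_nonneg (sub_nonneg.2 ht.2)] at h
  exact h

lemma continuousOn (hf : IsGeodesicSegment f x y) : ContinuousOn f (Set.Icc 0 (dist x y)) := by
  refine (LipschitzOnWith.of_dist_le_mul (K := 1) fun s hs t ht => ?_).continuousOn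
  rw [hf.2.2 s hs t ht, Real.dist_eq, NNReal.coe_one, one_mul]

lemma initial (hf : IsGeodesicSegment f x y) (ht : t ∈ Set.Icc 0 (dist x y)) :
    IsGeodesicSegment f x (f t) := by
  refine ⟨hf.1, by rw [hf.dist_left ht], ?_⟩
  rw [hf.dist_left ht]
  exact fun s hs u hu => hf.2.2 s ⟨hs.1, hs.2.trans ht.2⟩ u ⟨hu.1, hu.2.trans ht.2⟩

end IsGeodesicSegment

lemma mem_projSet_self {A : Set X} {a : X} (ha : a ∈ A) : a ∈ projSet A a :=
  ⟨ha, by rw [dist_self, Metric.infDist_zero_of_mem ha]⟩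

lemma exists_first_le {α β : Type*} [ConditionallyCompleteLinearOrder α] [TopologicalSpace α]
    [OrderTopology α] [DenselyOrdered α] [LinearOrder β] [TopologicalSpace β]
    [OrderClosedTopology β] {φ : α → β} {a b s : α} {c : β} (hφ : ContinuousOn φ (Set.Icc a b))
    (hs : s ∈ Set.Icc a b) (hsc : φ s ≤ c) :
    ∃ t ∈ Set.Icc a b, φ t ≤ c ∧ (t = a ∨ ∀ u ∈ Set.Icc a t, c ≤ φ u) := by
  have hclosed : IsClosed (Set.Icc a b ∩ φ ⁻¹' Set.Iic c) :=
    hφ.preimage_isClosed_of_isClosed isClosed_Icc isClosed_Iic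
  obtain ⟨t, ⟨ht, htc⟩, hleast⟩ :=
    (isCompact_Icc.of_isClosed_subset hclosed Set.inter_subset_left).exists_isLeast ⟨s, hs, hsc⟩
  refine ⟨t, ht, htc, or_iff_not_imp_left.2 fun hta => ?_⟩
  have hbefore : ∀ u ∈ Set.Ico a t, c ≤ φ u := fun u hu =>
    le_of_not_ge fun huc => hu.2.not_ge (hleast ⟨⟨hu.1, hu.2.le.trans ht.2⟩, huc⟩)
  rw [← closure_Ico (Ne.symm hta)]
  refine fun u hu => le_on_closure hbefore continuousOn_const (hφ.mono ?_) hu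
  rw [closure_Ico (Ne.symm hta)]
  exact Set.Icc_subset_Icc_right ht.2

/-- A `K`-contracting set: nearest points exist, and the endpoints of a geodesic staying at
distance at least `K` from `A` have nearest points in `A` at distance less than `K`. This is the
only part of `IsContractingAxisZ` that concerns the image of the axis and not its
parametrization. -/
structure IsContractingSet (K : ℝ) (A : Set X) : Prop where
  pos : 0 < K
  projSet_nonempty : ∀ x, (projSet A x).Nonempty
  dist_lt : ∀ {f : ℝ → X} {x y p q : X}, IsGeodesicSegment f x y →
    (∀ t ∈ Set.Icc 0 (dist x y), K ≤ Metric.infDist (f t) A) →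
    p ∈ projSet A x → q ∈ projSet A y → dist p q < K

namespace IsContractingSet

variable {K L : ℝ} {A B : Set X} {x y p q o : X}

lemma exists_dist_le {f : ℝ → X} (hA : IsContractingSet K A) (hf : IsGeodesicSegment f x y)
    (hp : p ∈ projSet A x) (hq : q ∈ projSet A y) (hpq : K ≤ dist p q) :
    ∃ t ∈ Set.Icc 0 (dist x y), dist (f t) p ≤ 2 * K := by
  obtain ⟨s, hs, hsK⟩ : ∃ s ∈ Set.Icc 0 (dist x y), Metric.infDist (f s) A ≤ K := by
    by_contra! hfar
    exact (hA.dist_lt hf (fun t ht => (hfar t ht).le) hp hq).not_ge hpq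
  obtain ⟨t, ht, htK, rfl | hfar⟩ := exists_first_le
    ((Metric.continuous_infDist_pt A).comp_continuousOn hf.continuousOn) hs hsK
  · refine ⟨0, ht, ?_⟩
    rw [Function.comp_apply, hf.1, ← hp.2] at htK
    rw [hf.1]
    linarith [hA.pos]
  · obtain ⟨r, hr⟩ := hA.projSet_nonempty (f t)
    have hpr : dist p r < K := by
      refine hA.dist_lt (hf.initial ht) ?_ hp hr
      rwa [hf.dist_left ht]
    refine ⟨t, ht, (dist_triangle_right (f t) p r).trans ?_⟩
    rw [Function.comp_apply, ← hr.2] at htK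
    linarith

lemma dist_add_dist_le (hgeo : IsGeodesicSpace X) (hA : IsContractingSet K A)
    (hp : p ∈ projSet A x) (hq : q ∈ projSet A y) (hpq : K ≤ dist p q) :
    dist x p + dist p y ≤ dist x y + 4 * K := by
  obtain ⟨f, hf⟩ := hgeo x y
  obtain ⟨t, ht, htp⟩ := hA.exists_dist_le hf hp hq hpq
  linarith [hf.dist_left ht, hf.dist_right ht, dist_triangle x (f t) p,
    dist_triangle_left p y (f t)]

lemma exists_dist_le_or_dist_le (hgeo : IsGeodesicSpace X) (hA : IsContractingSet K A)
    (hB : IsContractingSet L B) (hoA : o ∈ A) (hoB : o ∈ B)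
    (hbdd : Bornology.IsBounded (projSetOf B A)) :
    ∃ R : ℝ, ∀ x, ∀ p ∈ projSet A x, ∀ q ∈ projSet B x, dist o p ≤ R ∨ dist o q ≤ R := by
  obtain ⟨D, hD⟩ := hbdd.subset_closedBall o
  have hproj : ∀ a ∈ A, ∀ b ∈ projSet B a, dist b o ≤ D := fun a ha b hb =>
    hD (Set.mem_biUnion ha hb)
  have hD0 : 0 ≤ D := by simpa using hproj o hoA o (mem_projSet_self hoB)
  have hK := hA.pos
  have hL := hB.pos
  refine ⟨10 * K + 10 * L + 10 * D, fun x p hp q hq => ?_⟩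
  by_contra! hfar
  obtain ⟨f, hf⟩ := hgeo x o
  obtain ⟨t, ht, htp⟩ := hA.exists_dist_le hf hp (mem_projSet_self hoA)
    (by rw [dist_comm]; linarith)
  obtain ⟨s, hs, hsq⟩ := hB.exists_dist_le hf hq (mem_projSet_self hoB)
    (by rw [dist_comm]; linarith)
  obtain ⟨r, hr⟩ := hB.projSet_nonempty p
  have hro := hproj p hp.1 r hr
  -- From `p` to `q` one must pass near `o`, although both lie near the same geodesic to `o`.
  have hlong : dist o p + dist o q ≤ dist p q + 4 * L + 2 * D := by
    have := hB.dist_add_dist_le hgeo hr (mem_projSet_self hq.1)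
      (by linarith [dist_triangle_left o q r])
    linarith [dist_triangle_left o p r, dist_triangle_left o q r, dist_comm p r]
  have hshort : dist p q ≤ 2 * K + |t - s| + 2 * L := by
    linarith [dist_triangle4 p (f t) (f s) q, dist_comm p (f t), hf.2.2 t ht s hs]
  have hto := hf.dist_right ht
  have hso := hf.dist_right hs
  cases abs_cases (t - s) <;>
    linarith [dist_triangle_left o p (f t), dist_triangle_left o q (f s),
      dist_triangle (f t) p o, dist_triangle (f s) q o, dist_comm o p, dist_comm o q]

end IsContractingSet

lemma IsQuasigeodesicZ.tendsto_dist {K : ℝ} {γ : ℤ → X} (hγ : IsQuasigeodesicZ K γ) (hK : 0 < K)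
    (x : X) : Tendsto (fun i => dist x (γ i)) cofinite atTop := by
  have habs : Tendsto (fun i : ℤ => ‖(i : ℝ)‖) cofinite atTop :=
    tendsto_norm_cocompact_atTop.comp Int.tendsto_coe_cofinite
  refine tendsto_atTop_mono (fun i => ?_) (tendsto_atTop_add_const_right _ (-K - dist x (γ 0))
    (habs.atTop_div_const hK))
  have := (hγ i 0).1
  rw [Int.cast_zero, sub_zero, ← Real.norm_eq_abs] at this
  linarith [dist_triangle_left (γ i) (γ 0) x]

lemma projSet_range_nonempty {ι : Type*} [Nonempty ι] {γ : ι → X} {x : X}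
    (hγ : Tendsto (fun i => dist x (γ i)) cofinite atTop) :
    (projSet (Set.range γ) x).Nonempty := by
  obtain ⟨i, hi⟩ := hγ.exists_forall_le
  refine ⟨γ i, ⟨i, rfl⟩, le_antisymm ?_ (Metric.infDist_le_dist_of_mem ⟨i, rfl⟩)⟩
  rw [Metric.le_infDist (Set.range_nonempty γ)]
  rintro _ ⟨j, rfl⟩
  exact hi j

lemma IsContractingAxisZ.isContractingSet {K : ℝ} {γ : ℤ → X} (hγ : IsContractingAxisZ K γ)
    (hK : 0 < K) : IsContractingSet K (Set.range γ) where
  pos := hK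
  projSet_nonempty x := projSet_range_nonempty (hγ.1.tendsto_dist hK x)
  dist_lt {f x y p q} hf hfar hp hq := by
    have hmem : ∀ {t a}, t ∈ Set.Icc 0 (dist x y) → a ∈ projSet (Set.range γ) (f t) →
        a ∈ projSetOf (Set.range γ) (f '' Set.Icc 0 (dist x y)) := fun ht ha =>
      Set.mem_biUnion (Set.mem_image_of_mem f ht) ha
    refine edist_lt_ofReal.1 ((Metric.edist_le_ediam_of_mem (hmem (t := 0) ?_ ?_)
      (hmem (t := dist x y) ?_ ?_)).trans_lt (hγ.2 f x y hf hfar))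
    · exact ⟨le_rfl, dist_nonneg⟩
    · rwa [hf.1]
    · exact ⟨dist_nonneg, le_rfl⟩
    · rwa [hf.2.1]

end Geodesics

section Schottky

variable {G X : Type*} [Group G] [MetricSpace X] [MulAction G X] {o : X} {g h : G} {δ C : ℝ}

lemma self_mem_zorbit (o : X) (g : G) : o ∈ zorbit o g := ⟨0, by simp⟩

lemma IsContractingIsom.tendsto_dist_zpow_smul (hg : IsContractingIsom o g) :
    Tendsto (fun n : ℤ => dist o (g ^ n • o)) cofinite atTop := by
  obtain ⟨K, hK, hg⟩ := hg
  exact hg.1.tendsto_dist (by linarith) o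

lemma IsContractingIsom.exists_isContractingSet (hg : IsContractingIsom o g) :
    ∃ K, IsContractingSet K (zorbit o g) := by
  obtain ⟨K, hK, hg⟩ := hg
  exact ⟨K, hg.isContractingSet (by linarith)⟩

lemma image_zpow_smul_zorbit (o : X) (g : G) (n : ℤ) :
    (fun x => g ^ n • x) '' zorbit o g = zorbit o g := by
  rw [zorbit, ← Set.range_comp]
  refine Set.Subset.antisymm ?_ ?_ <;> rintro _ ⟨i, rfl⟩
  · exact ⟨n + i, by simp [zpow_add, mul_smul]⟩
  · exact ⟨i - n, by simp [← mul_smul, ← zpow_add]⟩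

lemma zpow_smul_mem_projSet_zorbit [IsIsometricSMul G X] (n : ℤ) {x p : X}
    (hp : p ∈ projSet (zorbit o g) x) : g ^ n • p ∈ projSet (zorbit o g) (g ^ n • x) := by
  refine ⟨image_zpow_smul_zorbit o g n ▸ Set.mem_image_of_mem _ hp.1, ?_⟩
  rw [dist_smul, hp.2, ← Metric.infDist_image (isometry_smul X (g ^ n)), image_zpow_smul_zorbit]

lemma IndependentPair.exists_card_le_projSet_near [IsIsometricSMul G X]
    (hgeo : IsGeodesicSpace X) (hgh : IndependentPair o g h) :
    ∃ (R : ℝ) (N : ℕ), ∀ x : X, ∃ s : Finset ℤ, s.card ≤ N ∧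
      ∀ n ∉ s, ∀ p ∈ projSet (zorbit o h) (g ^ n • x), dist o p ≤ R := by
  obtain ⟨hg, hh, hbdd, -⟩ := hgh
  obtain ⟨K, hA⟩ := hg.exists_isContractingSet
  obtain ⟨L, hB⟩ := hh.exists_isContractingSet
  obtain ⟨R, hR⟩ := hB.exists_dist_le_or_dist_le hgeo hA (self_mem_zorbit o h)
    (self_mem_zorbit o g) hbdd
  have hfin : {n : ℤ | ¬R < dist o (g ^ n • o)}.Finite :=
    hg.tendsto_dist_zpow_smul.eventually_gt_atTop R
  refine ⟨R, hfin.toFinset.card, fun x => ?_⟩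
  obtain ⟨_, ⟨⟨k, rfl⟩, hk⟩⟩ := hA.projSet_nonempty x
  refine ⟨hfin.toFinset.map (Equiv.subRight k).toEmbedding, (Finset.card_map _).le,
    fun n hn p hp => ?_⟩
  have hfar : R < dist o (g ^ (n + k) • o) := by
    by_contra hnear
    exact hn (Finset.mem_map.2 ⟨n + k, hfin.mem_toFinset.2 hnear, by simp⟩)
  have hproj := zpow_smul_mem_projSet_zorbit n ⟨⟨k, rfl⟩, hk⟩
  refine (hR _ p hp _ hproj).resolve_right (not_le.2 ?_)
  rwa [zpow_add, mul_smul] at hfar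

lemma IsContractingSet.dist_add_dist_le_zpow_smul [IsIsometricSMul G X] (hgeo : IsGeodesicSpace X)
    {K R : ℝ} {n : ℤ} {x z p q : X} (hA : IsContractingSet K (zorbit o h))
    (hn : K + 2 * R ≤ dist o (h ^ n • o)) (hp : p ∈ projSet (zorbit o h) x) (hpR : dist o p ≤ R)
    (hq : q ∈ projSet (zorbit o h) z) (hqR : dist o q ≤ R) :
    dist x o + dist o z ≤ dist x (h ^ n • z) + (4 * K + 2 * R + dist o (h ^ n • o)) := by
  have htranslate : ∀ y z : X, dist (h ^ n • y) (h ^ n • z) = dist y z := dist_smul _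
  have hpq : K ≤ dist p (h ^ n • q) := by
    linarith [dist_triangle4 o p (h ^ n • q) (h ^ n • o), htranslate q o, dist_comm q o]
  have := hA.dist_add_dist_le hgeo hp (zpow_smul_mem_projSet_zorbit n hq) hpq
  linarith [dist_triangle_right x o p, htranslate o z, dist_comm (h ^ n • o) o,
    dist_triangle4 (h ^ n • o) o p (h ^ n • z)]

/-- A `δ`-Schottky family in the sense of Gouëzel: for all `x` and `z`, the concatenation of a
geodesic from `x` to `o` with a translate by `w i` of one from `o` to `z` has no backtracking, up
to the constant `C`, except for a proportion at most `δ` of the indices `i ∈ I`. The family is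
indexed since its members need not be distinct. -/
def IsSchottky {ι : Type*} (o : X) (I : Finset ι) (w : ι → G) (δ C : ℝ) : Prop :=
  ∀ x z : X, ∃ B ⊆ I, (B.card : ℝ) ≤ δ * I.card ∧
    ∀ i ∈ I, i ∉ B → dist x o + dist o z ≤ dist x (w i • z) + C

lemma dist_inv_smul_left [IsIsometricSMul G X] (a : G) (x y : X) :
    dist (a⁻¹ • x) y = dist x (a • y) := by
  rw [← dist_smul a, smul_inv_smul]

lemma dist_add_dist_le_smul_mul_mul [IsIsometricSMul G X] {a b c : G} {x z : X}
    (hmid : dist (a⁻¹ • x) o + dist o (c • z) ≤ dist (a⁻¹ • x) (b • c • z) + C) :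
    dist x o + dist o z ≤
      dist x ((a * b * c) • z) + (C + dist o (a • o) + dist o (c • o)) := by
  rw [dist_inv_smul_left, dist_inv_smul_left] at hmid
  rw [mul_smul, mul_smul]
  linarith [dist_triangle_right x o (a • o), dist_triangle_left (c • o) (c • z) o, dist_smul c o z]

lemma card_range_filter_mem_le {f : ℕ → ℤ} (m : ℕ) (hf : Function.Injective f) (s : Finset ℤ) :
    ((Finset.range m).filter (f · ∈ s)).card ≤ s.card :=
  Finset.card_le_card_of_injOn f (fun _ hi => (Finset.mem_filter.1 hi).2) hf.injOn

lemma IndependentPair.exists_isSchottky [IsIsometricSMul G X] (hgeo : IsGeodesicSpace X)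
    (hgh : IndependentPair o g h) (hδ : 0 < δ) :
    ∃ (b m : ℕ) (C : ℝ), 0 < m ∧
      IsSchottky o (Finset.range m) (fun i => g ^ i * h ^ b * g ^ (m - i)) δ C := by
  obtain ⟨R, N, hnear⟩ := hgh.exists_card_le_projSet_near hgeo
  obtain ⟨K, hA⟩ := hgh.2.1.exists_isContractingSet
  obtain ⟨b, hb⟩ := ((hgh.2.1.tendsto_dist_zpow_smul.comp
    Nat.cast_injective.tendsto_cofinite).eventually_ge_atTop (K + 2 * R)).exists
  obtain ⟨m, hm⟩ := exists_nat_gt (2 * N / δ)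
  have hm0 : 0 < m := by exact_mod_cast (by positivity : 0 ≤ 2 * N / δ).trans_lt hm
  set S := ∑ j ∈ Finset.range (m + 1), dist o (g ^ j • o)
  have hS : ∀ j ≤ m, dist o (g ^ j • o) ≤ S := fun j hj =>
    Finset.single_le_sum (f := fun j => dist o (g ^ j • o)) (fun _ _ => dist_nonneg)
      (Finset.mem_range_succ_iff.2 hj)
  refine ⟨b, m, 4 * K + 2 * R + dist o (h ^ (b : ℤ) • o) + 2 * S, hm0, fun x z => ?_⟩
  obtain ⟨s, hs, hxs⟩ := hnear x
  obtain ⟨t, ht, hzt⟩ := hnear z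
  refine ⟨(Finset.range m).filter (fun i => -(i : ℤ) ∈ s) ∪
    (Finset.range m).filter (fun i => (m : ℤ) - i ∈ t), ?_, ?_, fun i hi hgood => ?_⟩
  · exact Finset.union_subset (Finset.filter_subset _ _) (Finset.filter_subset _ _)
  · have hs' := (card_range_filter_mem_le m (f := fun i => -(i : ℤ))
      (fun _ _ => by simp) s).trans hs
    have ht' := (card_range_filter_mem_le m (f := fun i => (m : ℤ) - i)
      (fun _ _ => by simp) t).trans ht
    rw [Finset.card_range, mul_comm]
    refine le_trans ?_ ((div_le_iff₀ hδ).1 hm.le)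
    exact_mod_cast (Finset.card_union_le _ _).trans (by lia)
  · simp only [Finset.mem_union, Finset.mem_filter, hi, true_and, not_or] at hgood
    have him : i ≤ m := (Finset.mem_range.1 hi).le
    obtain ⟨p, hp⟩ := hA.projSet_nonempty (g ^ (-(i : ℤ)) • x)
    obtain ⟨q, hq⟩ := hA.projSet_nonempty (g ^ ((m : ℤ) - i) • z)
    have hmid := hA.dist_add_dist_le_zpow_smul hgeo hb hp (hxs _ hgood.1 p hp) hq
      (hzt _ hgood.2 q hq)
    rw [← Nat.cast_sub him, zpow_neg] at hmid
    simp only [zpow_natCast] at hmid ⊢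
    linarith [dist_add_dist_le_smul_mul_mul hmid, hS i him, hS (m - i) (Nat.sub_le m i)]

lemma IsSchottky.exists_sum_ge [IsIsometricSMul G X] {ι : Type*} {I : Finset ι} {w : ι → G}
    (hw : IsSchottky o I w δ C) :
    ∃ C' : ℝ, ∀ x z, I.card * ((1 - 2 * δ) * dist o z - C') ≤
      ∑ i ∈ I, (dist x (w i • z) - dist x (w i • o)) := by
  classical
  set S := ∑ i ∈ I, dist o (w i • o)
  refine ⟨|C| + S, fun x z => ?_⟩
  obtain ⟨B, hBI, hB, hgood⟩ := hw x z
  have hterm : ∀ i ∈ I, dist o z - (|C| + S) - (if i ∈ B then 2 * dist o z else 0) ≤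
      dist x (w i • z) - dist x (w i • o) := by
    intro i hi
    have hiS : dist o (w i • o) ≤ S :=
      Finset.single_le_sum (f := fun i => dist o (w i • o)) (fun _ _ => dist_nonneg) hi
    have hS : 0 ≤ S := dist_nonneg.trans hiS
    split_ifs with hiB
    · linarith [dist_triangle x (w i • z) (w i • o), dist_smul (w i) z o, dist_comm z o,
        abs_nonneg C]
    · linarith [hgood i hi hiB, dist_triangle x o (w i • o), le_abs_self C]
  refine le_trans ?_ (Finset.sum_le_sum hterm)
  rw [Finset.sum_sub_distrib, Finset.sum_const, nsmul_eq_mul, Finset.sum_ite_mem,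
    Finset.inter_eq_right.2 hBI, Finset.sum_const, nsmul_eq_mul]
  nlinarith [mul_le_mul_of_nonneg_right hB (dist_nonneg (x := o) (y := z))]

end Schottky

section WeightedSummable

open Asymptotics

variable {α : Type*} {w u v F : α → ℝ}

/-- Membership of `u` in the weighted space `ℓ¹(w)`. -/
def WeightedSummable (w u : α → ℝ) : Prop := Summable fun a => u a * w a

/-- The norm of `u` in the weighted space `ℓ¹(w)`; it is `0` unless `WeightedSummable w u`. -/
noncomputable def weightedNorm (w u : α → ℝ) : ℝ := ∑' a, |u a * w a|

lemma weightedNorm_nonneg (w u : α → ℝ) : 0 ≤ weightedNorm w u := tsum_nonneg fun _ => abs_nonneg _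

lemma WeightedSummable.sub (hu : WeightedSummable w u) (hv : WeightedSummable w v) :
    WeightedSummable w (u - v) := by
  simpa only [WeightedSummable, Pi.sub_apply, sub_mul] using Summable.sub hu hv

lemma WeightedSummable.add (hu : WeightedSummable w u) (hv : WeightedSummable w v) :
    WeightedSummable w (u + v) := by
  simpa only [WeightedSummable, Pi.add_apply, add_mul] using Summable.add hu hv

lemma weightedNorm_add_le (hu : WeightedSummable w u) (hv : WeightedSummable w v) :
    weightedNorm w (u + v) ≤ weightedNorm w u + weightedNorm w v := by
  rw [weightedNorm, weightedNorm, weightedNorm, ← Summable.tsum_add hu.abs hv.abs]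
  refine Summable.tsum_le_tsum (fun a => ?_) (hu.add hv).abs (Summable.add hu.abs hv.abs)
  rw [Pi.add_apply, add_mul]
  exact abs_add_le _ _

lemma WeightedSummable.summable_mul (hu : WeightedSummable w u) (hF : F =O[⊤] w) :
    Summable fun a => u a * F a :=
  summable_of_isBigO hu (((isBigO_refl u ⊤).mul hF).mono le_top)

lemma WeightedSummable.abs_tsum_mul_le (hw : ∀ a, 0 ≤ w a) (hu : WeightedSummable w u) {c : ℝ}
    (hF : ∀ a, |F a| ≤ c * w a) : |∑' a, u a * F a| ≤ c * weightedNorm w u := by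
  rw [weightedNorm, ← tsum_mul_left, ← Real.norm_eq_abs]
  refine tsum_of_norm_bounded (hu.abs.mul_left c).hasSum fun a => ?_
  rw [Real.norm_eq_abs, abs_mul, abs_mul, abs_of_nonneg (hw a), mul_left_comm]
  exact mul_le_mul_of_nonneg_left (hF a) (abs_nonneg _)

end WeightedSummable

section Convolution

open Asymptotics

variable {G : Type*} [Group G] {w u v u' v' ρ F : G → ℝ}

/-- A Beurling weight: a submultiplicative weight which is at least `1`. The space `ℓ¹(w)` is then a
convolution algebra contained in `ℓ¹(G)`. -/
structure IsBeurlingWeight (w : G → ℝ) : Prop where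
  one_le : ∀ g, 1 ≤ w g
  mul_le : ∀ g h, w (g * h) ≤ w g * w h

namespace IsBeurlingWeight

lemma pos (hw : IsBeurlingWeight w) (g : G) : 0 < w g := one_pos.trans_le (hw.one_le g)

lemma isBigO_of_abs_le (hw : IsBeurlingWeight w) {c : ℝ} (hF : ∀ g, |F g| ≤ c) : F =O[⊤] w :=
  isBigO_of_le' (c := c) ⊤ fun g => by
    rw [Real.norm_eq_abs, Real.norm_eq_abs, abs_of_pos (hw.pos g)]
    exact (hF g).trans (le_mul_of_one_le_right ((abs_nonneg _).trans (hF g)) (hw.one_le g))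

lemma isBigO_inv_mul (hw : IsBeurlingWeight w) (hv : Summable v) (g : G) :
    (fun h => v (h⁻¹ * g)) =O[⊤] w :=
  hw.isBigO_of_abs_le fun h => hv.abs.le_tsum (h⁻¹ * g) fun _ _ => abs_nonneg _

lemma isBigO_prod (hw : IsBeurlingWeight w) (hF : F =O[⊤] w) :
    (fun p : G × G => F (p.1 * p.2)) =O[⊤] fun p => w p.1 * w p.2 := by
  refine (hF.comp_tendsto (k := fun p : G × G => p.1 * p.2) tendsto_top).trans
    (isBigO_of_le _ fun p => ?_)
  rw [Function.comp_apply, norm_mul, Real.norm_of_nonneg (hw.pos _).le,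
    Real.norm_of_nonneg (hw.pos _).le, Real.norm_of_nonneg (hw.pos _).le]
  exact hw.mul_le _ _

end IsBeurlingWeight

lemma conv_mul_eq_tsum (g : G) :
    conv u v g * F g = ∑' h, u h * (v (h⁻¹ * g) * F g) := by
  simp only [conv, ← mul_assoc, tsum_mul_right]

namespace WeightedSummable

lemma summable (hw : IsBeurlingWeight w) (hu : WeightedSummable w u) : Summable u := by
  simpa using hu.summable_mul (hw.isBigO_of_abs_le (F := fun _ => 1) fun _ => abs_one.le)

lemma summable_conv_fiber (hw : IsBeurlingWeight w) (hu : WeightedSummable w u)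
    (hv : Summable v) (g : G) : Summable fun h => u h * v (h⁻¹ * g) :=
  hu.summable_mul (hw.isBigO_inv_mul hv g)

lemma summable_prod (hw : IsBeurlingWeight w) (hu : WeightedSummable w u)
    (hv : WeightedSummable w v) (hF : F =O[⊤] w) :
    Summable fun p : G × G => u p.1 * (v (p.1⁻¹ * p.2) * F p.2) := by
  have hprod : Summable fun p : G × G => u p.1 * v p.2 * F (p.1 * p.2) := by
    refine summable_of_isBigO (summable_mul_of_summable_norm hu.norm hv.norm) ?_
    refine (((isBigO_refl (fun p : G × G => u p.1 * v p.2) ⊤).mul (hw.isBigO_prod hF)).mono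
      le_top).congr_right fun p => ?_
    ring
  refine (((Equiv.refl G).prodShear fun h => Equiv.mulLeft h⁻¹).summable_iff.2 hprod).congr
    fun p => ?_
  simp [mul_assoc]

lemma summable_conv_mul (hw : IsBeurlingWeight w) (hu : WeightedSummable w u)
    (hv : WeightedSummable w v) (hF : F =O[⊤] w) : Summable fun g => conv u v g * F g := by
  simp only [conv_mul_eq_tsum]
  exact (hu.summable_prod hw hv hF).prod_symm.prod

protected lemma conv (hw : IsBeurlingWeight w) (hu : WeightedSummable w u)
    (hv : WeightedSummable w v) : WeightedSummable w (conv u v) :=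
  hu.summable_conv_mul hw hv (isBigO_refl w ⊤)

lemma tsum_conv_mul (hw : IsBeurlingWeight w) (hu : WeightedSummable w u)
    (hv : WeightedSummable w v) (hF : F =O[⊤] w) :
    ∑' g, conv u v g * F g = ∑' h, u h * ∑' k, v k * F (h * k) := by
  simp only [conv_mul_eq_tsum]
  rw [Summable.tsum_comm (f := fun h g => u h * (v (h⁻¹ * g) * F g)) (hu.summable_prod hw hv hF)]
  refine tsum_congr fun h => ?_
  rw [tsum_mul_left, ← (Equiv.mulLeft h).tsum_eq]
  simp

lemma conv_assoc (hw : IsBeurlingWeight w) (hu : WeightedSummable w u)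
    (hv : WeightedSummable w v) (hρ : Summable ρ) :
    conv (conv u v) ρ = conv u (conv v ρ) := by
  funext x
  refine (hu.tsum_conv_mul hw hv (hw.isBigO_inv_mul hρ x)).trans (tsum_congr fun h => ?_)
  simp [conv, mul_assoc]

lemma weightedNorm_conv_le (hw : IsBeurlingWeight w) (hu : WeightedSummable w u)
    (hv : WeightedSummable w v) :
    weightedNorm w (conv u v) ≤ weightedNorm w u * weightedNorm w v := by
  -- The norm is the pairing with `F`, of modulus at most `w`, which detects the signs of `u ∗ v`.
  set F : G → ℝ := fun g => SignType.sign (conv u v g) * w g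
  have hF : ∀ g, |F g| ≤ w g := fun g => by
    rw [abs_mul, abs_of_pos (hw.pos g)]
    refine mul_le_of_le_one_left (hw.pos g).le ?_
    cases SignType.sign (conv u v g) <;> simp
  have hw0 : ∀ g, 0 ≤ w g := fun g => (hw.pos g).le
  have hnorm : weightedNorm w (conv u v) = ∑' g, conv u v g * F g :=
    tsum_congr fun g => by
      rw [abs_mul, abs_of_pos (hw.pos g), ← mul_assoc, self_mul_sign]
  rw [hnorm, hu.tsum_conv_mul hw hv (isBigO_of_le _ fun g => by
    rw [Real.norm_of_nonneg (hw0 g)]; exact hF g), mul_comm]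
  refine (le_abs_self _).trans (hu.abs_tsum_mul_le hw0 fun h => ?_)
  rw [mul_comm]
  exact hv.abs_tsum_mul_le hw0 fun k => (hF _).trans (hw.mul_le h k)

lemma conv_sub_conv (hw : IsBeurlingWeight w) (hu : WeightedSummable w u)
    (hu' : WeightedSummable w u') (hv : Summable v) (hv' : Summable v') :
    conv u' v' - conv u v = conv (u' - u) v' + conv u (v' - v) := by
  funext g
  simp only [conv, Pi.sub_apply, Pi.add_apply, sub_mul, mul_sub]
  rw [(hu'.summable_conv_fiber hw hv' g).tsum_sub (hu.summable_conv_fiber hw hv' g),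
    (hu.summable_conv_fiber hw hv' g).tsum_sub (hu.summable_conv_fiber hw hv g),
    sub_add_sub_cancel]

end WeightedSummable

end Convolution

section Scheffe

variable {α ι : Type*} {l : Filter ι} {w u : α → ℝ} {us : ι → α → ℝ}

lemma weightedNorm_sub_eq (hw : ∀ a, 0 ≤ w a) (hu : WeightedSummable w u) {v : α → ℝ}
    (hv : WeightedSummable w v) (hmin : WeightedSummable w fun a => min (u a) (v a)) :
    weightedNorm w (u - v) =
      ∑' a, u a * w a + ∑' a, v a * w a - 2 * ∑' a, min (u a) (v a) * w a := by
  rw [weightedNorm, ← tsum_mul_left, ← Summable.tsum_add hu hv,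
    ← (Summable.add hu hv).tsum_sub (hmin.mul_left 2)]
  refine tsum_congr fun a => ?_
  rw [Pi.sub_apply, abs_mul, abs_of_nonneg (hw a), ← max_sub_min_eq_abs']
  linear_combination w a * (max_add_min (u a) (v a))

lemma tendsto_weightedNorm_sub (hw : ∀ a, 0 ≤ w a) (hu : WeightedSummable w u)
    (hus : ∀ᶠ i in l, WeightedSummable w (us i)) (hpos : ∀ᶠ i in l, ∀ a, 0 ≤ us i a)
    (hlim : ∀ a, Tendsto (fun i => us i a) l (𝓝 (u a)))
    (htsum : Tendsto (fun i => ∑' a, us i a * w a) l (𝓝 (∑' a, u a * w a))) :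
    Tendsto (fun i => weightedNorm w (us i - u)) l (𝓝 0) := by
  have hbound : ∀ᶠ i in l, ∀ a, ‖min (us i a) (u a) * w a‖ ≤ ‖u a * w a‖ := by
    filter_upwards [hpos] with i hi a
    rw [norm_mul, norm_mul]
    refine mul_le_mul_of_nonneg_right ?_ (norm_nonneg _)
    rcases min_cases (us i a) (u a) with ⟨h, hle⟩ | ⟨h, -⟩ <;> rw [h]
    rw [Real.norm_of_nonneg (hi a)]
    exact hle.trans (le_abs_self _)
  have hmin : Tendsto (fun i => ∑' a, min (us i a) (u a) * w a) l (𝓝 (∑' a, u a * w a)) := by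
    refine tendsto_tsum_of_dominated_convergence hu.norm (fun a => ?_) hbound
    simpa using ((hlim a).min (tendsto_const_nhds (x := u a))).mul_const (w a)
  have hlimit := (htsum.add_const (∑' a, u a * w a)).sub (hmin.const_mul 2)
  rw [← two_mul, sub_self] at hlimit
  refine hlimit.congr' ?_
  filter_upwards [hus, hbound] with i hi hbi
  exact (weightedNorm_sub_eq hw hi hu (hu.norm.of_norm_bounded hbi)).symm

end Scheffe

section ConvPow

variable {G : Type*} [Group G] {w μ ν : G → ℝ}

lemma isBeurlingWeight_one : IsBeurlingWeight fun _ : G => (1 : ℝ) where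
  one_le _ := le_rfl
  mul_le _ _ := (mul_one 1).ge

lemma weightedSummable_one {α : Type*} {u : α → ℝ} (hu : Summable u) :
    WeightedSummable (fun _ => 1) u := by
  simpa [WeightedSummable] using hu

lemma convPow_zero_conv (μ ν : G → ℝ) : conv (convPow μ 0) ν = ν := by
  funext g
  rw [conv, tsum_eq_single 1 fun h hh => by simp [convPow, hh]]
  simp [convPow]

lemma convPow_one (μ : G → ℝ) : convPow μ 1 = μ := by
  funext g
  rw [convPow, conv, tsum_eq_single g fun h hh => by simp [convPow, inv_mul_eq_one, hh]]
  simp [convPow]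

lemma WeightedSummable.convPow (hw : IsBeurlingWeight w) (hμ : WeightedSummable w μ) :
    ∀ n, WeightedSummable w (convPow μ n)
  | 0 => summable_of_hasFiniteSupport <| (Set.finite_singleton (1 : G)).subset fun g hg => by
    by_contra hne
    exact hg (by simp [_root_.convPow, Set.mem_singleton_iff.not.1 hne])
  | n + 1 => hμ.conv hw (hμ.convPow hw n)

lemma convPow_add (hμ : Summable μ) (m n : ℕ) :
    convPow μ (m + n) = conv (convPow μ m) (convPow μ n) := by
  have hw := isBeurlingWeight_one (G := G)
  have hμw := weightedSummable_one hμ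
  induction m with
  | zero => rw [convPow_zero_conv, zero_add]
  | succ m ih =>
    rw [Nat.add_right_comm, convPow, ih, convPow,
      hμw.conv_assoc hw (hμw.convPow hw m) ((hμw.convPow hw n).summable hw)]

lemma conv_mul_pos (hμ0 : ∀ g, 0 ≤ μ g) (hμ : Summable μ) (hν0 : ∀ g, 0 ≤ ν g) (hν : Summable ν)
    {g h : G} (hg : 0 < μ g) (hh : 0 < ν h) : 0 < conv μ ν (g * h) :=
  ((weightedSummable_one hμ).summable_conv_fiber isBeurlingWeight_one hν (g * h)).tsum_pos
    (fun k => mul_nonneg (hμ0 k) (hν0 _)) g (mul_pos hg (by rwa [inv_mul_cancel_left]))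

namespace IsProbMeasure

protected lemma conv (hμ : IsProbMeasure μ) (hν : IsProbMeasure ν) : IsProbMeasure (conv μ ν) := by
  have hw := isBeurlingWeight_one (G := G)
  have hμw := weightedSummable_one hμ.2.1
  have hνw := weightedSummable_one hν.2.1
  refine ⟨fun g => tsum_nonneg fun h => mul_nonneg (hμ.1 h) (hν.1 _),
    (hμw.conv hw hνw).summable hw, ?_⟩
  simpa [hν.2.2, hμ.2.2] using hμw.tsum_conv_mul hw hνw (F := fun _ => 1)
    (Asymptotics.isBigO_refl _ _)

protected lemma convPow (hμ : IsProbMeasure μ) : ∀ n, IsProbMeasure (convPow μ n)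
  | 0 => by
    refine ⟨Set.indicator_nonneg fun _ _ => zero_le_one,
      (weightedSummable_one hμ.2.1).convPow isBeurlingWeight_one 0 |>.summable
        isBeurlingWeight_one, ?_⟩
    rw [tsum_eq_single 1 fun h hh => by simp [convPow, hh]]
    simp [convPow]
  | n + 1 => hμ.conv (hμ.convPow n)

lemma convPow_add_mul_pos (hμ : IsProbMeasure μ) {m n : ℕ} {g h : G} (hg : 0 < convPow μ m g)
    (hh : 0 < convPow μ n h) : 0 < convPow μ (m + n) (g * h) := by
  rw [convPow_add hμ.2.1]
  exact conv_mul_pos (hμ.convPow m).1 (hμ.convPow m).2.1 (hμ.convPow n).1 (hμ.convPow n).2.1 hg hh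

lemma convPow_mul_pow_pos (hμ : IsProbMeasure μ) {p : ℕ} {g : G} (hg : 0 < convPow μ p g) :
    ∀ i, 0 < convPow μ (p * i) (g ^ i)
  | 0 => by simp [convPow]
  | i + 1 => by
    rw [pow_succ, Nat.mul_succ]
    exact hμ.convPow_add_mul_pos (hμ.convPow_mul_pow_pos hg i) hg

lemma exists_convPow_pos_of_mem_closure (hμ : IsProbMeasure μ) {g : G}
    (hg : g ∈ Subsemigroup.closure {x | 0 < μ x}) : ∃ p, 0 < p ∧ 0 < convPow μ p g := by
  induction hg using Subsemigroup.closure_induction with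
  | mem x hx => exact ⟨1, one_pos, by rwa [convPow_one]⟩
  | mul x y _ _ ihx ihy =>
    obtain ⟨p, hp, hpx⟩ := ihx
    obtain ⟨q, -, hqy⟩ := ihy
    exact ⟨p + q, by lia, hμ.convPow_add_mul_pos hpx hqy⟩

end IsProbMeasure

variable {ι : Type*} {l : Filter ι} {μs νs : ι → G → ℝ}

lemma tendsto_weightedNorm_conv_sub (hw : IsBeurlingWeight w) (hμ : WeightedSummable w μ)
    (hν : WeightedSummable w ν) (hμs : ∀ᶠ i in l, WeightedSummable w (μs i))
    (hνs : ∀ᶠ i in l, WeightedSummable w (νs i))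
    (hμlim : Tendsto (fun i => weightedNorm w (μs i - μ)) l (𝓝 0))
    (hνlim : Tendsto (fun i => weightedNorm w (νs i - ν)) l (𝓝 0)) :
    Tendsto (fun i => weightedNorm w (conv (μs i) (νs i) - conv μ ν)) l (𝓝 0) := by
  have hlim := (hμlim.mul (hνlim.add_const (weightedNorm w ν))).add
    (hνlim.const_mul (weightedNorm w μ))
  rw [zero_mul, mul_zero, add_zero] at hlim
  refine squeeze_zero' (Eventually.of_forall fun i => weightedNorm_nonneg _ _) ?_ hlim
  filter_upwards [hμs, hνs] with i hμi hνi
  have hνi_le : weightedNorm w (νs i) ≤ weightedNorm w (νs i - ν) + weightedNorm w ν := by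
    simpa using weightedNorm_add_le (hνi.sub hν) hν
  rw [hμ.conv_sub_conv hw hμi (hν.summable hw) (hνi.summable hw)]
  calc _ ≤ _ := weightedNorm_add_le ((hμi.sub hμ).conv hw hνi) (hμ.conv hw (hνi.sub hν))
    _ ≤ _ := add_le_add
      (((hμi.sub hμ).weightedNorm_conv_le hw hνi).trans
        (mul_le_mul_of_nonneg_left hνi_le (weightedNorm_nonneg _ _)))
      (hμ.weightedNorm_conv_le hw (hνi.sub hν))

lemma tendsto_weightedNorm_convPow_sub (hw : IsBeurlingWeight w) (hμ : WeightedSummable w μ)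
    (hμs : ∀ᶠ i in l, WeightedSummable w (μs i))
    (hlim : Tendsto (fun i => weightedNorm w (μs i - μ)) l (𝓝 0)) (n : ℕ) :
    Tendsto (fun i => weightedNorm w (convPow (μs i) n - convPow μ n)) l (𝓝 0) := by
  induction n with
  | zero => simpa [convPow, weightedNorm] using tendsto_const_nhds
  | succ n ih =>
    exact tendsto_weightedNorm_conv_sub hw hμ (hμ.convPow hw n) hμs
      (hμs.mono fun i hi => hi.convPow hw n) hlim ih

end ConvPow

section Averages

variable {α : Type*} {μ F : α → ℝ} {s : ℝ}

namespace IsProbMeasure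

lemma add_mul_sub_le_tsum_mul (hμ : IsProbMeasure μ) (hF : Summable fun a => μ a * F a)
    (hs : ∀ a, s ≤ F a) (a : α) : s + μ a * (F a - s) ≤ ∑' a, μ a * F a := by
  have hsub : HasSum (fun a => μ a * (F a - s)) (∑' a, μ a * F a - s) := by
    simpa [mul_sub, hμ.2.2] using hF.hasSum.sub (hμ.2.1.hasSum.mul_right s)
  have := le_hasSum hsub a fun b _ => mul_nonneg (hμ.1 b) (sub_nonneg.2 (hs b))
  linarith

lemma le_tsum_mul (hμ : IsProbMeasure μ) (hF : Summable fun a => μ a * F a) (hs : ∀ a, s ≤ F a) :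
    s ≤ ∑' a, μ a * F a :=
  hasSum_le (fun a => mul_le_mul_of_nonneg_left (hs a) (hμ.1 a))
    (by simpa [hμ.2.2] using hμ.2.1.hasSum.mul_right s) hF.hasSum

lemma tsum_mul_le (hμ : IsProbMeasure μ) (hF : Summable fun a => μ a * F a) (hs : ∀ a, F a ≤ s) :
    ∑' a, μ a * F a ≤ s :=
  hasSum_le (fun a => mul_le_mul_of_nonneg_left (hs a) (hμ.1 a)) hF.hasSum
    (by simpa [hμ.2.2] using hμ.2.1.hasSum.mul_right s)

end IsProbMeasure

end Averages

section Drift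

open Asymptotics

variable {G X : Type*} [Group G] [MetricSpace X] [MulAction G X] {o : X} {μ ν ρ : G → ℝ} {s : ℝ}

/-- The weight whose space `ℓ¹(dispWeight o)` consists of the summable functions with finite first
moment. The summand `1` makes it a Beurling weight. -/
noncomputable def dispWeight (o : X) (g : G) : ℝ := 1 + dist o (g • o)

/-- The expected displacement, seen from `x`, of the basepoint by a `ν`-distributed element of
`G`: the average over `ν` of the horofunction `x ↦ d(x, g o) - d(x, o)`. -/
noncomputable def drift (o : X) (ν : G → ℝ) (x : X) : ℝ :=
  ∑' g, ν g * (dist x (g • o) - dist x o)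

lemma dispWeight_nonneg (o : X) (g : G) : 0 ≤ dispWeight o g := add_nonneg zero_le_one dist_nonneg

lemma isBeurlingWeight_dispWeight [IsIsometricSMul G X] (o : X) :
    IsBeurlingWeight (dispWeight o : G → ℝ) where
  one_le _ := le_add_of_nonneg_right dist_nonneg
  mul_le g h := by
    have := mul_nonneg (dist_nonneg (x := o) (y := g • o)) (dist_nonneg (x := o) (y := h • o))
    rw [dispWeight, mul_smul, dispWeight, dispWeight]
    linarith [dist_triangle o (g • o) (g • h • o), dist_smul g o (h • o)]

lemma HasFiniteFirstMoment.weightedSummable (hL : HasFiniteFirstMoment o μ) (hμ : Summable μ) :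
    WeightedSummable (dispWeight o) μ := by
  simpa [WeightedSummable, dispWeight, mul_add] using hμ.add hL

lemma tsum_mul_dispWeight (hL : HasFiniteFirstMoment o μ) (hμ : IsProbMeasure μ) :
    ∑' g, μ g * dispWeight o g = 1 + firstMoment o μ := by
  simp only [dispWeight, mul_add, mul_one]
  rw [hμ.2.1.tsum_add hL, hμ.2.2, firstMoment]

lemma isBigO_dist_smul (o : X) : (fun g : G => dist o (g • o)) =O[⊤] dispWeight o :=
  isBigO_of_le _ fun g => by
    rw [Real.norm_of_nonneg dist_nonneg, Real.norm_of_nonneg (dispWeight_nonneg o g)]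
    exact le_add_of_nonneg_left zero_le_one

lemma abs_dist_smul_sub_dist_le (o x : X) (g : G) :
    |dist x (g • o) - dist x o| ≤ dist o (g • o) := by
  rw [dist_comm o]
  exact dist_dist_dist_le_right x (g • o) o

lemma abs_dist_smul_sub_dist_le_dispWeight (o x : X) (g : G) :
    |dist x (g • o) - dist x o| ≤ dispWeight o g :=
  (abs_dist_smul_sub_dist_le o x g).trans (le_add_of_nonneg_left zero_le_one)

lemma summable_mul_dist_smul_sub (hμ : WeightedSummable (dispWeight o) μ) (x : X) :
    Summable fun g => μ g * (dist x (g • o) - dist x o) :=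
  hμ.summable_mul <| isBigO_of_le _ fun g =>
    (abs_dist_smul_sub_dist_le_dispWeight o x g).trans (le_abs_self _)

lemma drift_self (o : X) (μ : G → ℝ) : drift o μ o = firstMoment o μ := by
  simp [drift, firstMoment]

lemma firstMoment_nonneg (o : X) (hμ : ∀ g, 0 ≤ μ g) : 0 ≤ firstMoment o μ :=
  tsum_nonneg fun g => mul_nonneg (hμ g) dist_nonneg

lemma abs_drift_le (hμ : ∀ g, 0 ≤ μ g) (hμw : WeightedSummable (dispWeight o) μ) (x : X) :
    |drift o μ x| ≤ firstMoment o μ := by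
  rw [drift, ← Real.norm_eq_abs]
  refine tsum_of_norm_bounded (hμw.summable_mul (isBigO_dist_smul o)).hasSum fun g => ?_
  rw [norm_mul, Real.norm_of_nonneg (hμ g)]
  exact mul_le_mul_of_nonneg_left (abs_dist_smul_sub_dist_le o x g) (hμ g)

lemma abs_drift_sub_drift_le (hμ : WeightedSummable (dispWeight o) μ)
    (hν : WeightedSummable (dispWeight o) ν) (x : X) :
    |drift o ν x - drift o μ x| ≤ weightedNorm (dispWeight o) (ν - μ) := by
  have := (hν.sub hμ).abs_tsum_mul_le (dispWeight_nonneg o) (c := 1) fun g =>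
    (abs_dist_smul_sub_dist_le_dispWeight o x g).trans_eq (one_mul _).symm
  simp only [Pi.sub_apply, sub_mul] at this
  rwa [one_mul, (summable_mul_dist_smul_sub hν x).tsum_sub (summable_mul_dist_smul_sub hμ x)]
    at this

lemma drift_convPow_zero (o : X) (μ : G → ℝ) (x : X) : drift o (convPow μ 0) x = 0 := by
  rw [drift, tsum_eq_single 1 fun g hg => by simp [convPow, hg]]
  simp

variable [IsIsometricSMul G X]

lemma drift_inv_smul (o : X) (ρ : G → ℝ) (h : G) (x : X) :
    drift o ρ (h⁻¹ • x) = ∑' k, ρ k * (dist x (h • k • o) - dist x (h • o)) := by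
  simp only [drift, dist_inv_smul_left]

lemma summable_mul_drift_inv_smul (hν : WeightedSummable (dispWeight o) ν) (hρ : ∀ g, 0 ≤ ρ g)
    (hρw : WeightedSummable (dispWeight o) ρ) (x : X) :
    Summable fun h => ν h * drift o ρ (h⁻¹ • x) :=
  hν.summable_mul <| (isBeurlingWeight_dispWeight o).isBigO_of_abs_le fun _ =>
    abs_drift_le hρ hρw _

lemma drift_conv (hν : WeightedSummable (dispWeight o) ν) (hρ : IsProbMeasure ρ)
    (hρw : WeightedSummable (dispWeight o) ρ) (x : X) :
    drift o (conv ν ρ) x = drift o ν x + ∑' h, ν h * drift o ρ (h⁻¹ • x) := by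
  have hinner (h : G) : ∑' k, ρ k * (dist x ((h * k) • o) - dist x o) =
      dist x (h • o) - dist x o + drift o ρ (h⁻¹ • x) := by
    have hsum := summable_mul_dist_smul_sub hρw (h⁻¹ • x)
    simp only [dist_inv_smul_left] at hsum
    rw [drift_inv_smul, ← one_mul (dist x (h • o) - dist x o), ← hρ.2.2, ← tsum_mul_right,
      ← (hρ.2.1.mul_right _).tsum_add hsum]
    exact tsum_congr fun k => by rw [mul_smul]; ring
  rw [drift, hν.tsum_conv_mul (isBeurlingWeight_dispWeight o) hρw]
  · simp only [hinner, mul_add]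
    exact (summable_mul_dist_smul_sub hν x).tsum_add
      (summable_mul_drift_inv_smul hν hρ.1 hρw x)
  · exact isBigO_of_le _ fun g =>
      (abs_dist_smul_sub_dist_le_dispWeight o x g).trans (le_abs_self _)

lemma le_drift_conv (hν : IsProbMeasure ν) (hνw : WeightedSummable (dispWeight o) ν)
    (hρ : IsProbMeasure ρ) (hρw : WeightedSummable (dispWeight o) ρ)
    (hs : ∀ x, s ≤ drift o ρ x) (x : X) : drift o ν x + s ≤ drift o (conv ν ρ) x := by
  rw [drift_conv hνw hρ hρw]
  exact add_le_add_right (hν.le_tsum_mul (summable_mul_drift_inv_smul hνw hρ.1 hρw x)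
    fun h => hs _) _

lemma add_mul_sub_le_drift_conv (hν : IsProbMeasure ν) (hνw : WeightedSummable (dispWeight o) ν)
    (hρ : IsProbMeasure ρ) (hρw : WeightedSummable (dispWeight o) ρ)
    (hs : ∀ x, s ≤ drift o ρ x) (a : G) (x : X) :
    s + ν a * (drift o ρ (a⁻¹ • x) - s) - firstMoment o ν ≤ drift o (conv ν ρ) x := by
  rw [drift_conv hνw hρ hρw]
  linarith [(abs_le.1 (abs_drift_le hν.1 hνw x)).1, hν.add_mul_sub_le_tsum_mul
    (summable_mul_drift_inv_smul hνw hρ.1 hρw x) (fun h => hs _) a]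

lemma firstMoment_conv_le (hν : IsProbMeasure ν) (hνw : WeightedSummable (dispWeight o) ν)
    (hρ : IsProbMeasure ρ) (hρw : WeightedSummable (dispWeight o) ρ) :
    firstMoment o (conv ν ρ) ≤ firstMoment o ν + firstMoment o ρ := by
  rw [← drift_self, drift_conv hνw hρ hρw, drift_self]
  exact add_le_add_right (hν.tsum_mul_le (summable_mul_drift_inv_smul hνw hρ.1 hρw o)
    fun h => (abs_le.1 (abs_drift_le hρ.1 hρw _)).2) _

lemma mul_le_drift_convPow_mul (hμ : IsProbMeasure μ) (hμw : WeightedSummable (dispWeight o) μ)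
    {n : ℕ} (hs : ∀ x, s ≤ drift o (convPow μ n) x) (k : ℕ) (x : X) :
    k * s ≤ drift o (convPow μ (n * k)) x := by
  have hw := isBeurlingWeight_dispWeight (G := G) o
  induction k with
  | zero => rw [mul_zero, drift_convPow_zero, Nat.cast_zero, zero_mul]
  | succ k ih =>
    rw [Nat.mul_succ, convPow_add hμ.2.1, Nat.cast_succ, add_one_mul]
    exact (add_le_add_left ih s).trans (le_drift_conv (hμ.convPow _) (hμw.convPow hw _)
      (hμ.convPow n) (hμw.convPow hw n) hs x)

lemma firstMoment_convPow_mul_le (hμ : IsProbMeasure μ) (hμw : WeightedSummable (dispWeight o) μ)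
    (n k : ℕ) : firstMoment o (convPow μ (n * k)) ≤ k * firstMoment o (convPow μ n) := by
  have hw := isBeurlingWeight_dispWeight (G := G) o
  induction k with
  | zero => rw [mul_zero, ← drift_self, drift_convPow_zero, Nat.cast_zero, zero_mul]
  | succ k ih =>
    rw [Nat.mul_succ, convPow_add hμ.2.1, Nat.cast_succ, add_one_mul]
    exact (firstMoment_conv_le (hμ.convPow _) (hμw.convPow hw _) (hμ.convPow n)
      (hμw.convPow hw n)).trans (add_le_add_left ih _)

end Drift

section EscapeRate

variable {G X : Type*} [Group G] [MetricSpace X] [MulAction G X] {o : X} {μ : G → ℝ}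

lemma escapeRate_nonneg (o : X) (hμ : IsProbMeasure μ) : 0 ≤ escapeRate o μ :=
  le_ciInf fun _ => div_nonneg (firstMoment_nonneg o (hμ.convPow _).1) (by positivity)

lemma escapeRate_le_div (o : X) (hμ : IsProbMeasure μ) (n : ℕ) :
    escapeRate o μ ≤ firstMoment o (convPow μ (n + 1)) / (n + 1) := by
  refine ciInf_le ⟨0, ?_⟩ n
  rintro _ ⟨n, rfl⟩
  exact div_nonneg (firstMoment_nonneg o (hμ.convPow _).1) (by positivity)

lemma mul_escapeRate_le (o : X) (hμ : IsProbMeasure μ) :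
    ∀ n : ℕ, n * escapeRate o μ ≤ firstMoment o (convPow μ n)
  | 0 => by rw [← drift_self, drift_convPow_zero, Nat.cast_zero, zero_mul]
  | n + 1 => by
    rw [Nat.cast_succ, mul_comm, ← le_div_iff₀ (by positivity)]
    exact escapeRate_le_div o hμ n

lemma le_escapeRate [IsIsometricSMul G X] (hμ : IsProbMeasure μ)
    (hμw : WeightedSummable (dispWeight o) μ) {n : ℕ} {s : ℝ} (hn : 0 < n)
    (hs : ∀ x, n * s ≤ drift o (convPow μ n) x) : s ≤ escapeRate o μ := by
  refine le_ciInf fun m => (le_div_iff₀ (by positivity)).2 ?_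
  have hlower := mul_le_drift_convPow_mul hμ hμw hs (m + 1) o
  have hupper := firstMoment_convPow_mul_le hμ hμw (m + 1) n
  rw [drift_self, mul_comm n] at hlower
  refine le_of_mul_le_mul_left ?_ (Nat.cast_pos.2 hn : (0 : ℝ) < n)
  calc _ = ↑(m + 1) * (n * s) := by push_cast; ring
    _ ≤ _ := hlower.trans hupper

end EscapeRate

section WorstCaseDrift

open Asymptotics

variable {G X : Type*} [Group G] [MetricSpace X] [MulAction G X] [IsIsometricSMul G X] {o : X}
  {μ : G → ℝ} {ε δ : ℝ}

lemma NonElementary.exists_isSchottky (hgeo : IsGeodesicSpace X) (hμ : IsProbMeasure μ)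
    (hne : NonElementary o μ) (hδ : 0 < δ) :
    ∃ (N m : ℕ) (w : ℕ → G) (C : ℝ), 0 < N ∧ 0 < m ∧ IsSchottky o (Finset.range m) w δ C ∧
      ∀ i ∈ Finset.range m, 0 < convPow μ N (w i) := by
  obtain ⟨g, h, hg, hh, hgh⟩ := hne
  obtain ⟨p, hp, hg⟩ := hμ.exists_convPow_pos_of_mem_closure hg
  obtain ⟨q, -, hh⟩ := hμ.exists_convPow_pos_of_mem_closure hh
  obtain ⟨b, m, C, hm, hS⟩ := hgh.exists_isSchottky hgeo hδ
  refine ⟨p * m + q * b, m, _, C, by positivity, hm, hS, fun i hi => ?_⟩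
  have him : m = i + (m - i) := by have := Finset.mem_range.1 hi; omega
  have hN : p * m + q * b = p * i + q * b + p * (m - i) := by
    conv_lhs => rw [him, mul_add]
    ring
  rw [hN]
  exact hμ.convPow_add_mul_pos (hμ.convPow_add_mul_pos (hμ.convPow_mul_pow_pos hg i)
    (hμ.convPow_mul_pow_pos hh b)) (hμ.convPow_mul_pow_pos hg _)

namespace IsSchottky

variable {ι : Type*} {I : Finset ι} {w : ι → G} {C : ℝ}

lemma exists_drift_ge (hw : IsSchottky o I w δ C) (hI : I.Nonempty) :
    ∃ C', ∀ ρ : G → ℝ, IsProbMeasure ρ → WeightedSummable (dispWeight o) ρ →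
      ∀ x, ∃ i ∈ I, (1 - 2 * δ) * firstMoment o ρ - C' ≤ drift o ρ ((w i)⁻¹ • x) := by
  obtain ⟨C', hC'⟩ := hw.exists_sum_ge
  refine ⟨C', fun ρ hρ hρw x => Finset.exists_le_of_sum_le hI ?_⟩
  have hsum (i : ι) : Summable fun k => ρ k * (dist x (w i • k • o) - dist x (w i • o)) := by
    simpa only [dist_inv_smul_left] using summable_mul_dist_smul_sub hρw ((w i)⁻¹ • x)
  have hleft : HasSum (fun k => ρ k * (I.card * ((1 - 2 * δ) * dist o (k • o) - C')))
      (I.card * ((1 - 2 * δ) * firstMoment o ρ - C')) := by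
    have hdist := (hρw.summable_mul (isBigO_dist_smul o)).hasSum.mul_left (1 - 2 * δ)
    have hconst := hρ.2.1.hasSum.mul_left C'
    rw [hρ.2.2, mul_one] at hconst
    exact ((hdist.sub hconst).mul_left _).congr_fun fun k => by ring
  rw [Finset.sum_const, nsmul_eq_mul]
  simp only [drift_inv_smul]
  refine hasSum_le (fun k => ?_) hleft (hasSum_sum fun i _ => (hsum i).hasSum)
  rw [← Finset.mul_sum]
  exact mul_le_mul_of_nonneg_left (hC' x (k • o)) (hρ.1 k)

lemma exists_drift_conv_ge (hw : IsSchottky o I w δ C) (hI : I.Nonempty) {ν : G → ℝ}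
    (hν : IsProbMeasure ν) (hνw : WeightedSummable (dispWeight o) ν)
    (hpos : ∀ i ∈ I, 0 < ν (w i)) :
    ∃ C' α, 0 < α ∧ ∀ ρ : G → ℝ, IsProbMeasure ρ → WeightedSummable (dispWeight o) ρ →
      ∀ s, (∀ x, s ≤ drift o ρ x) → ∀ x,
        s + α * ((1 - 2 * δ) * firstMoment o ρ - C' - s) - firstMoment o ν ≤
          drift o (conv ν ρ) x := by
  obtain ⟨C', hC'⟩ := hw.exists_drift_ge hI
  obtain ⟨j, hj, hmin⟩ := I.exists_min_image (fun i => ν (w i)) hI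
  refine ⟨C', ν (w j), hpos j hj, fun ρ hρ hρw s hs x => ?_⟩
  obtain ⟨i, hi, hdrift⟩ := hC' ρ hρ hρw x
  refine le_trans ?_ (add_mul_sub_le_drift_conv hν hνw hρ hρw hs (w i) x)
  refine sub_le_sub_right (add_le_add_right ?_ s) _
  calc ν (w j) * ((1 - 2 * δ) * firstMoment o ρ - C' - s)
      ≤ ν (w j) * (drift o ρ ((w i)⁻¹ • x) - s) :=
        mul_le_mul_of_nonneg_left (sub_le_sub_right hdrift s) (hν.1 _)
    _ ≤ ν (w i) * (drift o ρ ((w i)⁻¹ • x) - s) :=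
        mul_le_mul_of_nonneg_right (hmin i hi) (sub_nonneg.2 (hs _))

lemma exists_drift_convPow_ge (hw : IsSchottky o I w δ C) (hI : I.Nonempty) (hδ : 2 * δ ≤ 1)
    (hμ : IsProbMeasure μ) (hμw : WeightedSummable (dispWeight o) μ) {N : ℕ}
    (hpos : ∀ i ∈ I, 0 < convPow μ N (w i)) :
    ∃ B, ∀ (k : ℕ) (x : X),
      (1 - 2 * δ) * escapeRate o μ * (k * N) - B ≤ drift o (convPow μ (N * k)) x := by
  have hW := isBeurlingWeight_dispWeight (G := G) o
  obtain ⟨C', α, hα, hstep⟩ :=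
    hw.exists_drift_conv_ge hI (hμ.convPow N) (hμw.convPow hW N) hpos
  set c := (1 - 2 * δ) * escapeRate o μ
  -- `B` is so large that gaining `B - C'` with weight `α` pays for one more block of `N` steps.
  obtain ⟨B, hB, hgain⟩ : ∃ B, 0 ≤ B ∧ firstMoment o (convPow μ N) + c * N ≤ α * (B - C') := by
    refine ⟨max 0 (C' + (firstMoment o (convPow μ N) + c * N) / α), le_max_left _ _, ?_⟩
    rw [← div_le_iff₀' hα, le_sub_iff_add_le']
    exact le_max_right _ _
  refine ⟨B, fun k => ?_⟩
  induction k with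
  | zero => intro x; simpa [drift_convPow_zero] using hB
  | succ k ih =>
    intro x
    have hrate : c * (k * N) ≤ (1 - 2 * δ) * firstMoment o (convPow μ (N * k)) := by
      have := mul_le_mul_of_nonneg_left (mul_escapeRate_le o hμ (N * k)) (sub_nonneg.2 hδ)
      push_cast at this
      linarith
    have hblock : α * (B - C') ≤
        α * ((1 - 2 * δ) * firstMoment o (convPow μ (N * k)) - C' - (c * (k * N) - B)) :=
      mul_le_mul_of_nonneg_left (by linarith) hα.le
    have := hstep _ (hμ.convPow (N * k)) (hμw.convPow hW _) _ ih x
    rw [mul_add_one, add_comm (N * k), convPow_add hμ.2.1]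
    push_cast
    linarith

end IsSchottky

lemma exists_forall_le_drift (hgeo : IsGeodesicSpace X) (hμ : IsProbMeasure μ)
    (hμw : WeightedSummable (dispWeight o) μ) (hne : NonElementary o μ) (hε : 0 < ε) :
    ∃ n : ℕ, 0 < n ∧ ∀ x : X, n * (escapeRate o μ - ε) ≤ drift o (convPow μ n) x := by
  set l := escapeRate o μ
  have hl : 0 ≤ l := escapeRate_nonneg o hμ
  obtain ⟨δ, hδ, hδ1, hδl⟩ : ∃ δ : ℝ, 0 < δ ∧ 2 * δ ≤ 1 ∧ 2 * δ * l ≤ ε / 2 := by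
    refine ⟨min (1 / 2) (ε / 4 / (l + 1)), by positivity,
      by linarith [min_le_left (1 / 2) (ε / 4 / (l + 1))], ?_⟩
    have : min (1 / 2) (ε / 4 / (l + 1)) * (l + 1) ≤ ε / 4 :=
      (le_div_iff₀ (by positivity)).1 (min_le_right _ _)
    have : 0 < min (1 / 2) (ε / 4 / (l + 1)) := by positivity
    linarith
  obtain ⟨N, m, w, C, hN, hm, hw, hpos⟩ := hne.exists_isSchottky hgeo hμ hδ
  obtain ⟨B, hB⟩ :=
    hw.exists_drift_convPow_ge (Finset.nonempty_range_iff.2 hm.ne') hδ1 hμ hμw hpos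
  obtain ⟨k, hk⟩ := exists_nat_gt (B / (ε / 2))
  refine ⟨N * (k + 1), by positivity, fun x => le_trans ?_ (hB (k + 1) x)⟩
  have hN1 : (1 : ℝ) ≤ N := Nat.one_le_cast.2 hN
  have hBk : B ≤ (k + 1) * N * (ε / 2) := by
    calc B ≤ k * (ε / 2) := ((div_lt_iff₀ (by positivity)).1 hk).le
      _ ≤ _ := by gcongr; nlinarith [(k.cast_nonneg : (0 : ℝ) ≤ k)]
  have hloss := mul_le_mul_of_nonneg_left hδl (by positivity : (0 : ℝ) ≤ (k + 1) * N)
  push_cast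
  linarith

end WorstCaseDrift

section Continuity

variable {G X ι : Type*} [Group G] [MetricSpace X] [MulAction G X] {o : X} {μ : G → ℝ}
  {μs : ι → G → ℝ} {l : Filter ι} {r : ℝ}

lemma tendsto_weightedNorm_dispWeight_sub (hμ : IsProbMeasure μ) (hL : HasFiniteFirstMoment o μ)
    (hμs : ∀ᶠ i in l, IsProbMeasure (μs i)) (hLs : ∀ᶠ i in l, HasFiniteFirstMoment o (μs i))
    (hsimple : ∀ g, Tendsto (fun i => μs i g) l (𝓝 (μ g)))
    (hLconv : Tendsto (fun i => firstMoment o (μs i)) l (𝓝 (firstMoment o μ))) :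
    Tendsto (fun i => weightedNorm (dispWeight o) (μs i - μ)) l (𝓝 0) := by
  refine tendsto_weightedNorm_sub (dispWeight_nonneg o) (hL.weightedSummable hμ.2.1)
    ?_ (hμs.mono fun i h => h.1) hsimple ?_
  · filter_upwards [hμs, hLs] with i h hL using hL.weightedSummable h.2.1
  · rw [tsum_mul_dispWeight hL hμ]
    refine (hLconv.const_add 1).congr' ?_
    filter_upwards [hμs, hLs] with i h hL using (tsum_mul_dispWeight hL h).symm

variable [IsIsometricSMul G X]

lemma eventually_lt_escapeRate (hgeo : IsGeodesicSpace X) (hμ : IsProbMeasure μ)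
    (hμw : WeightedSummable (dispWeight o) μ) (hne : NonElementary o μ)
    (hμs : ∀ᶠ i in l, IsProbMeasure (μs i))
    (hμsw : ∀ᶠ i in l, WeightedSummable (dispWeight o) (μs i))
    (hlim : Tendsto (fun i => weightedNorm (dispWeight o) (μs i - μ)) l (𝓝 0))
    (hr : r < escapeRate o μ) : ∀ᶠ i in l, r < escapeRate o (μs i) := by
  have hW := isBeurlingWeight_dispWeight (G := G) o
  set ε := (escapeRate o μ - r) / 3 with hε
  have hε0 : 0 < ε := by linarith
  obtain ⟨n, hn, hdrift⟩ := exists_forall_le_drift hgeo hμ hμw hne hε0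
  filter_upwards [hμs, hμsw,
    (tendsto_weightedNorm_convPow_sub hW hμw hμsw hlim n).eventually_lt_const hε0]
    with i h hw hclose
  have hle : escapeRate o μ - 2 * ε ≤ escapeRate o (μs i) := by
    refine le_escapeRate h hw hn fun x => ?_
    have hdiff := (abs_le.1 (abs_drift_sub_drift_le (hμw.convPow hW n) (hw.convPow hW n) x)).1
    have hnε : ε ≤ n * ε := le_mul_of_one_le_left hε0.le (Nat.one_le_cast.2 hn)
    linarith [hdrift x]
  linarith

lemma eventually_escapeRate_lt (hμw : WeightedSummable (dispWeight o) μ)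
    (hμs : ∀ᶠ i in l, IsProbMeasure (μs i))
    (hμsw : ∀ᶠ i in l, WeightedSummable (dispWeight o) (μs i))
    (hlim : Tendsto (fun i => weightedNorm (dispWeight o) (μs i - μ)) l (𝓝 0))
    (hr : escapeRate o μ < r) : ∀ᶠ i in l, escapeRate o (μs i) < r := by
  have hW := isBeurlingWeight_dispWeight (G := G) o
  obtain ⟨n, hn⟩ := exists_lt_of_ciInf_lt hr
  rw [div_lt_iff₀ (by positivity)] at hn
  filter_upwards [hμs, hμsw, (tendsto_weightedNorm_convPow_sub hW hμw hμsw hlim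
    (n + 1)).eventually_lt_const (sub_pos.2 hn)] with i h hw hclose
  refine (escapeRate_le_div o h n).trans_lt ((div_lt_iff₀ (by positivity)).2 ?_)
  have hdiff := (abs_le.1 (abs_drift_sub_drift_le (hμw.convPow hW (n + 1))
    (hw.convPow hW (n + 1)) o)).2
  rw [drift_self, drift_self] at hdiff
  linarith

theorem escape_rate_continuity_general (hgeo : IsGeodesicSpace X) (hμ : IsProbMeasure μ)
    (hne : NonElementary o μ) (hL : HasFiniteFirstMoment o μ)
    (hμs : ∀ᶠ i in l, IsProbMeasure (μs i)) (hLs : ∀ᶠ i in l, HasFiniteFirstMoment o (μs i))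
    (hsimple : ∀ g, Tendsto (fun i => μs i g) l (𝓝 (μ g)))
    (hLconv : Tendsto (fun i => firstMoment o (μs i)) l (𝓝 (firstMoment o μ))) :
    Tendsto (fun i => escapeRate o (μs i)) l (𝓝 (escapeRate o μ)) := by
  have hμw := hL.weightedSummable hμ.2.1
  have hμsw : ∀ᶠ i in l, WeightedSummable (dispWeight o) (μs i) := by
    filter_upwards [hμs, hLs] with i h hL using hL.weightedSummable h.2.1
  have hlim := tendsto_weightedNorm_dispWeight_sub hμ hL hμs hLs hsimple hLconv
  exact tendsto_order.2 ⟨fun _ => eventually_lt_escapeRate hgeo hμ hμw hne hμs hμsw hlim,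
    fun _ => eventually_escapeRate_lt hμw hμs hμsw hlim⟩

end Continuity

/-- Continuity of the escape rate (Theorem 1.1 / Gouëzel): if `μ_i → μ` simply and
`L(μ_i) → L(μ)`, then `l(μ_i) → l(μ)`. -/
theorem escape_rate_continuity
    {G X : Type*} [Group G] [Countable G] [MetricSpace X] [MulAction G X]
    (o : X) (hgeo : IsGeodesicSpace X)
    (hiso : ∀ g : G, Isometry fun x : X => g • x)
    (hind : HasIndepContracting G o)
    (μ : G → ℝ) (hμ : IsProbMeasure μ) (hne : NonElementary o μ)
    (hL : HasFiniteFirstMoment o μ)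
    (μs : ℕ → G → ℝ) (hμs : ∀ i, IsProbMeasure (μs i))
    (hsimple : ∀ g : G, Filter.Tendsto (fun i => μs i g) Filter.atTop (𝓝 (μ g)))
    (hLfin : ∀ᶠ i in Filter.atTop, HasFiniteFirstMoment o (μs i))
    (hLconv : Filter.Tendsto (fun i => firstMoment o (μs i)) Filter.atTop
      (𝓝 (firstMoment o μ))) :
    Filter.Tendsto (fun i => escapeRate o (μs i)) Filter.atTop (𝓝 (escapeRate o μ)) := by
  have : IsIsometricSMul G X := ⟨hiso⟩
  exact escape_rate_continuity_general hgeo hμ hne hL (.of_forall hμs) hLfin hsimple hLconv
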